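/- For the sequences generated by Algorithm 1, for every i ∈ I one has lim_{n→∞} ‖x_n − z_n^{(i)}‖ = 0 and lim_{n→∞} ‖T_i(x_n) − x_n‖ = 0. -/

import Mathlib

open Filter Topology

theorem aux_xu (b α δ : ℕ → ℝ) (hα : ∀ n, 0 < α n ∧ α n ≤ 1) (hs : ¬ Summable α)
    (hb : ∀ n, 0 ≤ b n) (hδ : Tendsto δ atTop (𝓝 0))
    (hrec : ∀ n, b (n+1) ≤ (1 - α n) * b n + α n * δ n) : Tendsto b atTop (𝓝 0) := by
  rw [Metric.tendsto_atTop]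
  intro ε hε
  obtain ⟨N, hN⟩ := (Metric.tendsto_atTop.1 hδ) (ε/2) (by linarith)
  have hδ' : ∀ n ≥ N, δ n ≤ ε/2 := fun n hn => by
    have := hN n hn
    rw [Real.dist_eq, sub_zero] at this
    exact (le_abs_self _).trans this.le
  have key : ∀ k, b (N+k) - ε/2 ≤ Real.exp (-(∑ j ∈ Finset.range k, α (j+N))) * b N := by
    have key2 : ∀ k, max (b (N+k) - ε/2) 0 ≤ Real.exp (-(∑ j ∈ Finset.range k, α (j+N))) * b N := by
      intro k
      induction k with
      | zero => simp; exact ⟨by linarith, hb N⟩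
      | succ k ih =>
        rw [Finset.sum_range_succ, neg_add, Real.exp_add]
        have h1 := hrec (N+k)
        have h2 := hδ' (N+k) (by omega)
        have h3 := hα (N+k)
        have h4 : 1 - α (N+k) ≤ Real.exp (-α (N+k)) := by
          have := Real.add_one_le_exp (-α (N+k)); linarith
        rw [show k + N = N + k by omega]
        have h5 : max (b (N+(k+1)) - ε/2) 0 ≤ (1 - α (N+k)) * max (b (N+k) - ε/2) 0 := by
          apply max_le
          · have := mul_le_mul_of_nonneg_left (le_max_left (b (N+k) - ε/2) 0)
              (by linarith : 0 ≤ 1 - α (N+k))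
            have := mul_le_mul_of_nonneg_left h2 h3.1.le
            rw [← add_assoc]
            linarith
          · exact mul_nonneg (by linarith) (le_max_right _ _)
        have h6 := mul_le_mul h4 ih (le_max_right _ _) (Real.exp_pos _).le
        linarith
    exact fun k => (le_max_left _ _).trans (key2 k)
  have hs' : ¬ Summable (fun j => α (j+N)) := fun h => hs ((summable_nat_add_iff N).1 h)
  have ht := (not_summable_iff_tendsto_nat_atTop_of_nonneg (fun j => (hα (j+N)).1.le)).1 hs'
  have ht2 : Tendsto (fun k => Real.exp (-(∑ j ∈ Finset.range k, α (j+N))) * b N) atTop (𝓝 0) := by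
    have := (Real.tendsto_exp_neg_atTop_nhds_zero.comp ht).mul_const (b N)
    simpa using this
  obtain ⟨K, hK⟩ := (Metric.tendsto_atTop.1 ht2) (ε/2) (by linarith)
  refine ⟨N+K, fun n hn => ?_⟩
  obtain ⟨k, rfl⟩ : ∃ k, n = N + k := ⟨n - N, by omega⟩
  have h1 := hK k (by omega)
  have h2 := key k
  rw [Real.dist_eq, sub_zero] at h1 ⊢
  rw [abs_of_nonneg (hb _)]
  have := le_abs_self (Real.exp (-(∑ j ∈ Finset.range k, α (j+N))) * b N)
  linarith

section
variable {H : Type*} [NormedAddCommGroup H] [InnerProductSpace ℝ H]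

theorem aux_prox (f : H → ℝ) (hf : ConvexOn ℝ Set.univ f) (l : ℝ) (hl : 0 < l) (a y : H)
    (hy : ∀ v, f y + (1/(2*l)) * ‖a - y‖^2 ≤ f v + (1/(2*l)) * ‖a - v‖^2) (v : H) :
    inner ℝ (a - y) (v - y) ≤ l * (f v - f y) := by
  have h1 : ∀ t : ℝ, 0 < t → t ≤ 1 →
      inner ℝ (a - y) (v - y) ≤ l * (f v - f y) + t * (‖v - y‖^2 / 2) := by
    intro t ht ht1
    have h2 := hy (y + t • (v - y))
    have h3 := hf.2 (Set.mem_univ y) (Set.mem_univ v) (by linarith : 0 ≤ 1 - t) ht.le (by ring)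
    have h4 : (1 - t) • y + t • v = y + t • (v - y) := by module
    rw [h4] at h3
    have h5 : a - (y + t • (v - y)) = (a - y) - t • (v - y) := by abel
    rw [h5, norm_sub_sq_real (a - y) (t • (v - y)), norm_smul, inner_smul_right, mul_pow, Real.norm_eq_abs, sq_abs] at h2
    simp only [smul_eq_mul] at h3
    have h6 : 0 ≤ t * (f v - f y) + (1/(2*l)) * (-(2 * (t * inner ℝ (a - y) (v - y))) + t^2 * ‖v - y‖^2) := by
      linarith
    have h7 : 0 ≤ (2 * l / t) * (t * (f v - f y) + (1/(2*l)) * (-(2 * (t * inner ℝ (a - y) (v - y))) + t^2 * ‖v - y‖^2)) :=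
      mul_nonneg (by positivity) h6
    have h8 : (2 * l / t) * (t * (f v - f y) + (1/(2*l)) * (-(2 * (t * inner ℝ (a - y) (v - y))) + t^2 * ‖v - y‖^2))
      = 2 * l * (f v - f y) - 2 * inner ℝ (a - y) (v - y) + t * ‖v - y‖^2 := by
      field_simp
      ring
    linarith
  apply le_of_forall_pos_le_add
  intro ε hε
  have hp : 0 ≤ ‖v - y‖^2 / 2 := by positivity
  set q := ‖v - y‖^2 / 2
  have h2 := h1 (min 1 (ε / (q + 1))) (by positivity) (min_le_left _ _)
  have h3 : min 1 (ε / (q + 1)) * q ≤ ε / (q+1) * q := mul_le_mul_of_nonneg_right (min_le_right _ _) hp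
  have h4 : ε / (q+1) * q ≤ ε := by
    rw [div_mul_eq_mul_div, div_le_iff₀ (by positivity)]
    nlinarith
  linarith

theorem aux_prox_diff (y1 y2 z1 z2 d1 d2 : H) (l1 l2 F1 F2 : ℝ) (h1 : 0 < l1) (h2 : 0 < l2)
    (ip1 : inner ℝ (z1 + l1 • d1 - y1) (y2 - y1) ≤ l1 * (F2 - F1))
    (ip2 : inner ℝ (z2 + l2 • d2 - y2) (y1 - y2) ≤ l2 * (F1 - F2)) :
    ‖y2 - y1‖ ≤ ‖(z2 - z1) + l2 • (d2 - d1)‖ + l2 * |1/l2 - 1/l1| * ‖z1 - y1‖ := by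
  set μ := l2 / l1 with hμ
  have hμ0 : 0 < μ := by positivity
  set V := (z2 - z1) + l2 • (d2 - d1) + (1 - μ) • (z1 - y1) with hV
  have e1 : μ * inner ℝ (z1 + l1 • d1 - y1) (y2 - y1) ≤ l2 * (F2 - F1) := by
    have := mul_le_mul_of_nonneg_left ip1 hμ0.le
    rwa [← mul_assoc, hμ, div_mul_cancel₀ _ h1.ne'] at this
  have e2 : inner ℝ V (y2 - y1) - inner ℝ (y2 - y1) (y2 - y1)
      = - inner ℝ (z2 + l2 • d2 - y2) (y1 - y2) - μ * inner ℝ (z1 + l1 • d1 - y1) (y2 - y1) := by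
    have hl : l2 = μ * l1 := by rw [hμ]; field_simp
    rw [← inner_sub_left, ← inner_neg_right, ← real_inner_smul_left, neg_sub, ← inner_sub_left]
    congr 1
    rw [hV]
    rw [hl]
    module
  rw [real_inner_self_eq_norm_sq] at e2
  have e3 : ‖y2 - y1‖^2 ≤ ‖V‖ * ‖y2 - y1‖ := by
    have := real_inner_le_norm V (y2 - y1)
    linarith
  have e4 : ‖y2 - y1‖ ≤ ‖V‖ := by
    by_contra hc
    push Not at hc
    nlinarith [norm_nonneg V, norm_nonneg (y2 - y1)]
  have e5 : ‖V‖ ≤ ‖(z2 - z1) + l2 • (d2 - d1)‖ + ‖(1 - μ) • (z1 - y1)‖ := norm_add_le _ _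
  have e6 : ‖(1 - μ) • (z1 - y1)‖ = l2 * |1/l2 - 1/l1| * ‖z1 - y1‖ := by
    rw [norm_smul, Real.norm_eq_abs]
    congr 1
    rw [← abs_of_pos h2, ← abs_mul, abs_of_pos h2]
    congr 1
    rw [hμ]; field_simp
  linarith

theorem aux_nonexp (T : H → H) (hT : ∀ x y, ‖T x - T y‖^2 ≤ inner ℝ (T x - T y) (x - y)) (x y : H) :
    ‖T x - T y‖ ≤ ‖x - y‖ := by
  have := real_inner_le_norm (T x - T y) (x - y)
  have h2 := hT x y
  by_contra hc
  push Not at hc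
  nlinarith [norm_nonneg (T x - T y), norm_nonneg (x - y)]

theorem aux_firm (T : H → H) (hT : ∀ x y, ‖T x - T y‖^2 ≤ inner ℝ (T x - T y) (x - y)) (y p : H)
    (hp : T p = p) : ‖T y - p‖^2 ≤ ‖y - p‖^2 - ‖y - T y‖^2 := by
  have h := hT y p
  rw [hp] at h
  have h2 : y - T y = (y - p) - (T y - p) := by abel
  rw [h2, norm_sub_sq_real (y - p) (T y - p), real_inner_comm]
  linarith

variable [CompleteSpace H]

theorem aux_descent (h : H → ℝ) (g : H → H) (hg : ∀ x, HasGradientAt h (g x) x) (K : ℝ)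
    (hlip : ∀ x y, ‖g x - g y‖ ≤ K * ‖x - y‖) (x v : H) :
    h (x + v) ≤ h x + inner ℝ (g x) v + K / 2 * ‖v‖^2 := by
  let φ : ℝ → ℝ := fun t => h (x + t • v) - t * inner ℝ (g x) v - K / 2 * t^2 * ‖v‖^2
  have hd : ∀ t, HasDerivAt φ (inner ℝ (g (x + t • v)) v - inner ℝ (g x) v - K * t * ‖v‖^2) t := by
    intro t
    have h1 : HasDerivAt (fun t : ℝ => x + t • v) v t := by
      simpa using ((hasDerivAt_id t).smul_const v).const_add x
    have h2 := (hg (x + t • v)).hasFDerivAt.comp_hasDerivAt t h1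
    have h3 := (h2.sub ((hasDerivAt_id t).mul_const (inner ℝ (g x) v))).sub
      ((((hasDerivAt_id t).pow 2).const_mul (K/2)).mul_const (‖v‖^2))
    refine (h3.congr_deriv ?_)
    simp
    left
    ring
  have hanti : AntitoneOn φ (Set.Icc 0 1) := by
    apply antitoneOn_of_deriv_nonpos (convex_Icc 0 1)
    · exact fun t _ => (hd t).continuousAt.continuousWithinAt
    · exact fun t _ => (hd t).differentiableAt.differentiableWithinAt
    · intro t ht
      rw [interior_Icc] at ht
      rw [(hd t).deriv, ← inner_sub_left]
      have a1 := real_inner_le_norm (g (x + t • v) - g x) v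
      have a2 := hlip (x + t • v) x
      rw [add_sub_cancel_left, norm_smul, Real.norm_eq_abs, abs_of_pos ht.1] at a2
      have a3 := mul_le_mul_of_nonneg_right a2 (norm_nonneg v)
      nlinarith
  have := hanti (Set.left_mem_Icc.2 zero_le_one) (Set.right_mem_Icc.2 zero_le_one) zero_le_one
  simp [φ] at this
  linarith

theorem aux_grad_ineq (h : H → ℝ) (g : H → H) (hc : ConvexOn ℝ Set.univ h)
    (hg : ∀ x, HasGradientAt h (g x) x) (x v : H) :
    h x + inner ℝ (g x) v ≤ h (x + v) := by
  have h1 : HasDerivAt (fun t : ℝ => x + t • v) v 0 := by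
    simpa using ((hasDerivAt_id (0:ℝ)).smul_const v).const_add x
  have h2 : HasDerivAt (fun t : ℝ => h (x + t • v)) (inner ℝ (g x) v) 0 := by
    have h0 := (hg (x + (0:ℝ) • v)).hasFDerivAt.comp_hasDerivAt (0:ℝ) h1
    simpa [Function.comp_def] using h0
  have hconv : ConvexOn ℝ Set.univ (fun t : ℝ => h (x + t • v)) := by
    refine ⟨convex_univ, fun s _ t _ a b ha hb hab => ?_⟩
    have := hc.2 (Set.mem_univ (x + s • v)) (Set.mem_univ (x + t • v)) ha hb hab
    have e : a • (x + s • v) + b • (x + t • v) = x + (a • s + b • t) • v := by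
      have : b = 1 - a := by linarith
      subst this
      simp only [smul_eq_mul]
      module
    rw [e] at this
    exact this
  have := hconv.le_slope_of_hasDerivAt (Set.mem_univ 0) (Set.mem_univ 1) zero_lt_one h2
  simp [slope] at this
  linarith

theorem aux_half (h : H → ℝ) (g : H → H) (hc : ConvexOn ℝ Set.univ h)
    (hg : ∀ x, HasGradientAt h (g x) x) (L : ℝ) (hL : 0 < L)
    (hlip : ∀ x y, ‖g x - g y‖ ≤ 1 / L * ‖x - y‖) (x y : H) :
    h x + inner ℝ (g x) (y - x) + L / 2 * ‖g y - g x‖^2 ≤ h y := by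
  have h1 := aux_descent h g hg (1/L) hlip y (-(L • (g y - g x)))
  have h2 := aux_grad_ineq h g hc hg x ((y - x) + -(L • (g y - g x)))
  have e : x + ((y - x) + -(L • (g y - g x))) = y + -(L • (g y - g x)) := by abel
  rw [e, inner_add_right, inner_neg_right, inner_smul_right] at h2
  rw [inner_neg_right, inner_smul_right, norm_neg, norm_smul, Real.norm_eq_abs, abs_of_pos hL] at h1
  have e2 : inner ℝ (g y) (g y - g x) - inner ℝ (g x) (g y - g x) = ‖g y - g x‖^2 := by
    rw [← inner_sub_left, real_inner_self_eq_norm_sq]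
  have e3 : 1 / L / 2 * (L * ‖g y - g x‖)^2 = L / 2 * ‖g y - g x‖^2 := by field_simp
  rw [e3] at h1
  have e4 : L * inner ℝ (g y) (g y - g x) - L * inner ℝ (g x) (g y - g x) = L * ‖g y - g x‖^2 := by
    rw [← e2]; ring
  linarith

theorem aux_step (h : H → ℝ) (g : H → H) (hc : ConvexOn ℝ Set.univ h)
    (hg : ∀ x, HasGradientAt h (g x) x) (L : ℝ) (hL : 0 < L)
    (hlip : ∀ x y, ‖g x - g y‖ ≤ 1 / L * ‖x - y‖) (l : ℝ) (hl : 0 < l) (hl2 : l ≤ 2 * L) (x y : H) :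
    ‖(x - y) - l • (g x - g y)‖ ≤ ‖x - y‖ := by
  have h1 := aux_half h g hc hg L hL hlip x y
  have h2 := aux_half h g hc hg L hL hlip y x
  have e1 : inner ℝ (g x) (y - x) = - inner ℝ (g x) (x - y) := by rw [← inner_neg_right, neg_sub]
  rw [e1, norm_sub_rev (g y)] at h1
  have h3 : L * ‖g x - g y‖^2 ≤ inner ℝ (x - y) (g x - g y) := by
    rw [real_inner_comm, inner_sub_left]; linarith
  apply le_of_sq_le_sq _ (norm_nonneg _)
  rw [norm_sub_sq_real (x - y) (l • (g x - g y)), norm_smul, inner_smul_right, Real.norm_eq_abs, abs_of_pos hl]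
  have h4 := mul_le_mul_of_nonneg_left h3 hl.le
  have h5 : l * l * ‖g x - g y‖^2 ≤ l * (2 * L) * ‖g x - g y‖^2 := by gcongr
  nlinarith

theorem aux_dB (D β : ℕ → ℝ) (C : ℝ) (hC : 0 ≤ C) (hD : ∀ n, 0 ≤ D n)
    (hβ : Tendsto β atTop (𝓝 0)) (hrec : ∀ n ≥ 1, D (n+1) ≤ C + β n * D n) :
    ∃ B, ∀ n, D n ≤ B := by
  obtain ⟨N, hN⟩ := eventually_atTop.1 (hβ.eventually_lt_const (show (0:ℝ) < 1/2 by norm_num))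
  have h1 : ∀ k, D (N+1+k) ≤ D (N+1) + 2 * C := by
    intro k
    induction k with
    | zero => simp; linarith
    | succ k ih =>
      have a1 := hrec (N+1+k) (by omega)
      have a2 := mul_le_mul_of_nonneg_right (hN (N+1+k) (by omega)).le (hD (N+1+k))
      have a3 := hD (N+1)
      rw [← add_assoc]
      linarith
  refine ⟨∑ n ∈ Finset.range (N+1), D n + (D (N+1) + 2 * C), fun n => ?_⟩
  have hs : 0 ≤ ∑ n ∈ Finset.range (N+1), D n := Finset.sum_nonneg (fun i _ => hD i)
  by_cases hn : n < N + 1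
  · have := Finset.single_le_sum (f := D) (fun i _ => hD i) (Finset.mem_range.2 hn)
    have := hD (N+1)
    linarith
  · have := h1 (n - (N+1))
    rw [show N + 1 + (n - (N+1)) = n by omega] at this
    linarith

theorem aux_rec (f h : H → ℝ) (g T : H → H) (L : ℝ)
    (hf : ConvexOn ℝ Set.univ f) (hc : ConvexOn ℝ Set.univ h)
    (hg : ∀ x, HasGradientAt h (g x) x) (hL : 0 < L)
    (hlip : ∀ x y, ‖g x - g y‖ ≤ 1 / L * ‖x - y‖)
    (hT : ∀ x y, ‖T x - T y‖^2 ≤ inner ℝ (T x - T y) (x - y))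
    (θ lam β α : ℕ → ℝ)
    (hθ_range : ∀ n, 0 ≤ θ n)
    (hlam_pos : ∀ n, 0 < lam n)
    (hlam_le : ∀ n, lam n ≤ 2 * L)
    (hβ_range : ∀ n, 0 < β n)
    (hα_range : ∀ n, 0 < α n ∧ α n ≤ 1)
    (hθ_anti : Antitone θ)
    (hβ_anti : Antitone β)
    (hlam_lim : Tendsto lam atTop (𝓝 0))
    (hC2 : Tendsto (fun n => (1 / α (n+1)) * |1 / lam (n+1) - 1 / lam n|) atTop (𝓝 0))
    (hC3 : Tendsto (fun n => (1 / lam (n+1)) * |1 - α n / α (n+1)|) atTop (𝓝 0))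
    (hC5 : Tendsto (fun n => θ n / (α (n+1) * lam (n+1))) atTop (𝓝 0))
    (hC7 : Tendsto (fun n => β n / α (n+1)) atTop (𝓝 0))
    (W Z Y D W' : ℕ → H) (u : H)
    (hz : ∀ n ≥ 1, Z n = W n + θ n • (W n - W (n-1)))
    (hd : ∀ n ≥ 1, D (n+1) = -(g (Z n)) + β n • D n)
    (hy : ∀ n ≥ 1, ∀ v : H,
      f (Y n) + (1 / (2 * lam n)) * ‖Z n + lam n • D (n+1) - Y n‖ ^ 2
        ≤ f v + (1 / (2 * lam n)) * ‖Z n + lam n • D (n+1) - v‖ ^ 2)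
    (hw : ∀ n ≥ 1, W' n = α n • u + (1 - α n) • T (Y n))
    (C : ℝ) (bW : ∀ n, ‖W n‖ ≤ C) (bZ : ∀ n, ‖Z n‖ ≤ C) (bY : ∀ n, ‖Y n‖ ≤ C)
    (bD : ∀ n, ‖D n‖ ≤ C) (bT : ∀ n, ‖T (Y n)‖ ≤ C) (bu : ‖u‖ ≤ C) :
    ∃ δ : ℕ → ℝ, (∀ n, 0 ≤ δ n) ∧ Tendsto δ atTop (𝓝 0) ∧
      ∀ n ≥ 1, ‖W' (n+1) - W' n‖ ≤ (1 - α (n+1)) * ‖W (n+1) - W n‖ + α (n+1) * δ n := by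
  have hC : 0 ≤ C := (norm_nonneg u).trans bu
  have b2 : ∀ a b : H, ‖a‖ ≤ C → ‖b‖ ≤ C → ‖a - b‖ ≤ 2 * C := fun a b ha hb => by
    have := norm_sub_le a b
    linarith
  refine ⟨fun n => 4 * C * (lam (n+1) * ((1 / α (n+1)) * |1 / lam (n+1) - 1 / lam n| +
    (1 / lam (n+1)) * |1 - α n / α (n+1)| + θ n / (α (n+1) * lam (n+1)) + β n / α (n+1))),
    ?_, ?_, ?_⟩
  · intro n
    have := hα_range (n+1)
    have := hlam_pos (n+1)
    have := hθ_range n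
    have := hβ_range n
    have : 0 < α (n+1) := by linarith
    positivity
  · have := (((hlam_lim.comp (tendsto_add_atTop_nat 1)).mul
      (((hC2.add hC3).add hC5).add hC7)).const_mul (4 * C))
    simpa [Function.comp_def] using this
  · intro n hn
    obtain ⟨ha, ha1⟩ := hα_range (n+1)
    have hl := hlam_pos (n+1)
    have hθ := hθ_range n
    have hβ := hβ_range n
    have pr := aux_prox_diff (Y n) (Y (n+1)) (Z n) (Z (n+1)) (D (n+1)) (D (n+1+1)) (lam n)
      (lam (n+1)) (f (Y n)) (f (Y (n+1))) (hlam_pos n) hl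
      (aux_prox f hf _ (hlam_pos n) _ _ (hy n hn) _)
      (aux_prox f hf _ hl _ _ (hy (n+1) (by omega)) _)
    have s1 : ‖W' (n+1) - W' n‖ ≤ |α (n+1) - α n| * (2 * C) + (1 - α (n+1)) * ‖Y (n+1) - Y n‖ := by
      have e : W' (n+1) - W' n = (α (n+1) - α n) • (u - T (Y n)) +
          (1 - α (n+1)) • (T (Y (n+1)) - T (Y n)) := by
        rw [hw _ hn, hw (n+1) (by omega)]; module
      rw [e]
      refine (norm_add_le _ _).trans ?_
      rw [norm_smul, norm_smul, Real.norm_eq_abs, Real.norm_eq_abs,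
        abs_of_nonneg (by linarith : 0 ≤ 1 - α (n+1))]
      gcongr
      · exact b2 _ _ bu (bT n)
      · exact aux_nonexp T hT _ _
    have s2 : ‖(Z (n+1) - Z n) + lam (n+1) • (D (n+1+1) - D (n+1))‖ ≤
        ‖Z (n+1) - Z n‖ + lam (n+1) * (2 * C * β n) := by
      have e : (Z (n+1) - Z n) + lam (n+1) • (D (n+1+1) - D (n+1)) =
          ((Z (n+1) - Z n) - lam (n+1) • (g (Z (n+1)) - g (Z n))) +
          lam (n+1) • (β (n+1) • D (n+1) - β n • D n) := by
        conv_lhs => rw [hd (n+1) (by omega)]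
        conv_lhs => rw [show lam (n+1) • (-g (Z (n+1)) + β (n+1) • D (n+1) - D (n+1)) =
          lam (n+1) • (-g (Z (n+1)) + β (n+1) • D (n+1) - (-(g (Z n)) + β n • D n)) by
            rw [← hd n hn]]
        module
      rw [e]
      refine (norm_add_le _ _).trans ?_
      have q1 := aux_step h g hc hg L hL hlip _ hl (hlam_le (n+1)) (Z (n+1)) (Z n)
      have q2 : ‖β (n+1) • D (n+1) - β n • D n‖ ≤ 2 * C * β n := by
        refine (norm_sub_le _ _).trans ?_
        rw [norm_smul, norm_smul, Real.norm_eq_abs, Real.norm_eq_abs, abs_of_pos hβ,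
          abs_of_pos (hβ_range (n+1))]
        have r1 := hβ_anti (Nat.le_succ n)
        have r2 : β (n+1) * ‖D (n+1)‖ ≤ β n * C := mul_le_mul r1 (bD _) (norm_nonneg _) hβ.le
        have r3 : β n * ‖D n‖ ≤ β n * C := mul_le_mul_of_nonneg_left (bD _) hβ.le
        linarith
      rw [norm_smul, Real.norm_eq_abs, abs_of_pos hl]
      gcongr
    have s3 : ‖Z (n+1) - Z n‖ ≤ ‖W (n+1) - W n‖ + 4 * C * θ n := by
      have e : Z (n+1) - Z n = (W (n+1) - W n) + (θ (n+1) • (W (n+1) - W n) -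
          θ n • (W n - W (n-1))) := by
        rw [hz n hn, hz (n+1) (by omega), Nat.add_sub_cancel]; module
      rw [e]
      refine (norm_add_le _ _).trans ?_
      gcongr
      refine (norm_sub_le _ _).trans ?_
      rw [norm_smul, norm_smul, Real.norm_eq_abs, Real.norm_eq_abs, abs_of_nonneg hθ,
          abs_of_nonneg (hθ_range (n+1))]
      have r1 := hθ_anti (Nat.le_succ n)
      have r2 : θ (n+1) * ‖W (n+1) - W n‖ ≤ θ n * (2 * C) :=
        mul_le_mul r1 (b2 _ _ (bW _) (bW _)) (norm_nonneg _) hθ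
      have r3 : θ n * ‖W n - W (n-1)‖ ≤ θ n * (2 * C) :=
        mul_le_mul_of_nonneg_left (b2 _ _ (bW _) (bW _)) hθ
      linarith
    have s4 : lam (n+1) * |1 / lam (n+1) - 1 / lam n| * ‖Z n - Y n‖ ≤
        lam (n+1) * |1 / lam (n+1) - 1 / lam n| * (2 * C) := by
      gcongr
      exact b2 _ _ (bZ _) (bY _)
    set Δ := |1 / lam (n+1) - 1 / lam n| with hΔ
    have hΔ0 : 0 ≤ Δ := abs_nonneg _
    have s5 : |α (n+1) - α n| = α (n+1) * |1 - α n / α (n+1)| := by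
      nth_rw 2 [← abs_of_pos ha]
      rw [← abs_mul, mul_sub, mul_one, mul_div_cancel₀ _ ha.ne']
    have s6 : (1 - α (n+1)) * ‖Y (n+1) - Y n‖ ≤ (1 - α (n+1)) * ‖W (n+1) - W n‖ +
        (4 * C * θ n + lam (n+1) * (2 * C * β n) + lam (n+1) * Δ * (2 * C)) := by
      have t : ‖Y (n+1) - Y n‖ ≤ ‖W (n+1) - W n‖ +
        (4 * C * θ n + lam (n+1) * (2 * C * β n) + lam (n+1) * Δ * (2 * C)) := by linarith
      have t2 : 0 ≤ 4 * C * θ n + lam (n+1) * (2 * C * β n) + lam (n+1) * Δ * (2 * C) := by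
        positivity
      have t3 := mul_le_mul_of_nonneg_left t (by linarith : 0 ≤ 1 - α (n+1))
      nlinarith
    have s7 : α (n+1) * (4 * C * (lam (n+1) * ((1 / α (n+1)) * Δ +
        (1 / lam (n+1)) * |1 - α n / α (n+1)| + θ n / (α (n+1) * lam (n+1)) + β n / α (n+1))))
        = 4 * C * (lam (n+1) * Δ) + 4 * C * (α (n+1) * |1 - α n / α (n+1)|) + 4 * C * θ n
          + 4 * C * (lam (n+1) * β n) := by
      generalize |1 - α n / α (n+1)| = q
      field_simp
    rw [s7, ← s5]
    have p1 : 0 ≤ C * (lam (n+1) * Δ) := by positivity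
    have p2 : 0 ≤ C * |α (n+1) - α n| := by positivity
    have p3 : 0 ≤ C * (lam (n+1) * β n) := by positivity
    linarith

theorem aux_fejer (f : H → ℝ) (T : H → H) (hf : ConvexOn ℝ Set.univ f)
    (hT : ∀ x y, ‖T x - T y‖^2 ≤ inner ℝ (T x - T y) (x - y))
    (θ lam α : ℕ → ℝ)
    (hθ_range : ∀ n, 0 ≤ θ n ∧ θ n < 1)
    (hlam_pos : ∀ n, 0 < lam n)
    (hα_range : ∀ n, 0 < α n ∧ α n ≤ 1)
    (hθ_lim : Tendsto θ atTop (𝓝 0))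
    (hlam_lim : Tendsto lam atTop (𝓝 0))
    (hα_lim : Tendsto α atTop (𝓝 0))
    (W Z Y D W' : ℕ → H) (u : H)
    (hz : ∀ n ≥ 1, Z n = W n + θ n • (W n - W (n-1)))
    (hy : ∀ n ≥ 1, ∀ v : H,
      f (Y n) + (1 / (2 * lam n)) * ‖Z n + lam n • D (n+1) - Y n‖ ^ 2
        ≤ f v + (1 / (2 * lam n)) * ‖Z n + lam n • D (n+1) - v‖ ^ 2)
    (hw : ∀ n ≥ 1, W' n = α n • u + (1 - α n) • T (Y n))
    (C : ℝ) (bW : ∀ n, ‖W n‖ ≤ C) (bY : ∀ n, ‖Y n‖ ≤ C)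
    (bD : ∀ n, ‖D n‖ ≤ C) (p : H) (hp : T p = p) :
    ∃ e : ℕ → ℝ, Tendsto e atTop (𝓝 0) ∧
      ∀ n ≥ 1, ‖W' n - p‖^2 + (‖Z n - Y n‖^2 + ‖Y n - T (Y n)‖^2) ≤ ‖W n - p‖^2 + e n := by
  have hC : 0 ≤ C := (norm_nonneg _).trans (bW 0)
  obtain ⟨m, hm⟩ : ∃ m, ∀ n, m ≤ f (Y n) := by
    set a := Z 1 + lam 1 • D (1+1)
    refine ⟨f (Y 1) - (1 / (2 * lam 1)) * (‖a‖ + C)^2, fun n => ?_⟩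
    have h1 := hy 1 le_rfl (Y n)
    have hl := hlam_pos 1
    have h2 : (1 / (2 * lam 1)) * ‖a - Y n‖^2 ≤ (1 / (2 * lam 1)) * (‖a‖ + C)^2 := by
      gcongr
      exact (norm_sub_le _ _).trans (by linarith [bY n])
    have h3 : 0 ≤ (1 / (2 * lam 1)) * ‖a - Y 1‖^2 := by positivity
    linarith
  refine ⟨fun n => α n * ‖u - p‖^2 + lam n * (2 * (f p - m + C * (‖p‖ + C))) +
    θ n * (4 * C * (C + ‖p‖) + 4 * C^2), ?_, ?_⟩
  · have := ((hα_lim.mul_const (‖u - p‖^2)).add (hlam_lim.mul_const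
      (2 * (f p - m + C * (‖p‖ + C))))).add (hθ_lim.mul_const (4 * C * (C + ‖p‖) + 4 * C^2))
    simpa using this
  intro n hn
  obtain ⟨ha, ha1⟩ := hα_range n
  obtain ⟨ht, ht1⟩ := hθ_range n
  have hl := hlam_pos n
  have s1 : ‖W' n - p‖^2 ≤ α n * ‖u - p‖^2 + ‖T (Y n) - p‖^2 := by
    have e : W' n - p = α n • (u - p) + (1 - α n) • (T (Y n) - p) := by
      rw [hw n hn]; module
    have q : ‖W' n - p‖ ≤ α n * ‖u - p‖ + (1 - α n) * ‖T (Y n) - p‖ := by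
      rw [e]
      refine (norm_add_le _ _).trans ?_
      rw [norm_smul, norm_smul, Real.norm_eq_abs, Real.norm_eq_abs, abs_of_pos ha,
        abs_of_nonneg (by linarith : 0 ≤ 1 - α n)]
    have q2 : ‖W' n - p‖^2 ≤ (α n * ‖u - p‖ + (1 - α n) * ‖T (Y n) - p‖)^2 := by gcongr
    have q3 : 0 ≤ α n * (1 - α n) * (‖u - p‖ - ‖T (Y n) - p‖)^2 :=
      mul_nonneg (mul_nonneg ha.le (by linarith)) (sq_nonneg _)
    have q4 : 0 ≤ α n * ‖T (Y n) - p‖^2 := by positivity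
    nlinarith
  have s2 := aux_firm T hT (Y n) p hp
  have s3 := aux_prox f hf _ hl _ _ (hy n hn) p
  have s4 : ‖Y n - p‖^2 = ‖Z n - p‖^2 - ‖Z n - Y n‖^2 + 2 * inner ℝ (Z n - Y n) (p - Y n) := by
    have e : Z n - p = (Z n - Y n) - (p - Y n) := by abel
    rw [e, norm_sub_sq_real (Z n - Y n) (p - Y n), norm_sub_rev (Y n) p]
    ring
  have s5 : inner ℝ (Z n + lam n • D (n+1) - Y n) (p - Y n) =
      inner ℝ (Z n - Y n) (p - Y n) + lam n * inner ℝ (D (n+1)) (p - Y n) := by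
    rw [← real_inner_smul_left, ← inner_add_left]
    congr 1
    abel
  have s6 : -(C * (‖p‖ + C)) ≤ inner ℝ (D (n+1)) (p - Y n) := by
    have q := abs_real_inner_le_norm (D (n+1)) (p - Y n)
    have q2 : ‖D (n+1)‖ * ‖p - Y n‖ ≤ C * (‖p‖ + C) :=
      mul_le_mul (bD _) ((norm_sub_le _ _).trans (by linarith [bY n])) (norm_nonneg _) hC
    exact (abs_le.1 (q.trans q2)).1
  have s7 : inner ℝ (Z n - Y n) (p - Y n) ≤ lam n * (f p - m + C * (‖p‖ + C)) := by
    have := mul_le_mul_of_nonneg_left s6 hl.le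
    have := mul_le_mul_of_nonneg_left (hm n) hl.le
    linarith
  have s8 : ‖Z n - p‖^2 ≤ ‖W n - p‖^2 + θ n * (4 * C * (C + ‖p‖) + 4 * C^2) := by
    have e : Z n - p = (W n - p) + θ n • (W n - W (n-1)) := by rw [hz n hn]; abel
    have q : ‖Z n - p‖ ≤ ‖W n - p‖ + θ n * (2 * C) := by
      rw [e]
      refine (norm_add_le _ _).trans ?_
      rw [norm_smul, Real.norm_eq_abs, abs_of_nonneg ht]
      gcongr
      exact (norm_sub_le _ _).trans (by linarith [bW n, bW (n-1)])
    have q2 : ‖Z n - p‖^2 ≤ (‖W n - p‖ + θ n * (2 * C))^2 := by gcongr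
    have q3 : ‖W n - p‖ ≤ C + ‖p‖ := (norm_sub_le _ _).trans (by linarith [bW n])
    have q4 : θ n * (4 * C) * ‖W n - p‖ ≤ θ n * (4 * C) * (C + ‖p‖) := by gcongr
    have q5 : θ n * θ n * (4 * C^2) ≤ θ n * 1 * (4 * C^2) := by gcongr
    nlinarith
  linarith

end

theorem alg1_xz_and_Tx_tendsto_zero
    {H : Type*} [NormedAddCommGroup H] [InnerProductSpace ℝ H] [CompleteSpace H]
    (M : ℕ) (hM : 1 ≤ M)
    (f h : ℕ → H → ℝ) (h' : ℕ → H → H) (L : ℕ → ℝ) (T : ℕ → H → H)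
    (hf_cont : ∀ i ∈ Finset.Icc 1 M, Continuous (f i))
    (hf_conv : ∀ i ∈ Finset.Icc 1 M, ConvexOn ℝ Set.univ (f i))
    (hh_conv : ∀ i ∈ Finset.Icc 1 M, ConvexOn ℝ Set.univ (h i))
    (hh_grad : ∀ i ∈ Finset.Icc 1 M, ∀ x : H, HasGradientAt (h i) (h' i x) x)
    (hL_pos : ∀ i ∈ Finset.Icc 1 M, 0 < L i)
    (hh_lip : ∀ i ∈ Finset.Icc 1 M, ∀ x y : H, ‖h' i x - h' i y‖ ≤ (1 / L i) * ‖x - y‖)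
    (hT_firm : ∀ i ∈ Finset.Icc 1 M, ∀ x y : H,
      ‖T i x - T i y‖ ^ 2 ≤ @inner ℝ H _ (T i x - T i y) (x - y))
    (S : Set H) (hS : S = ⋂ i ∈ Finset.Icc 1 M, {x : H | T i x = x}) (hS_ne : S.Nonempty)
    (θ lam β α : ℕ → ℝ) (σ : ℝ) (hσ : 1 ≤ σ)
    (hθ_range : ∀ n, 0 ≤ θ n ∧ θ n < 1)
    (hlam_pos : ∀ n, 0 < lam n)
    (hlam_le : ∀ n, ∀ i ∈ Finset.Icc 1 M, lam n ≤ 2 * L i)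
    (hβ_range : ∀ n, 0 < β n ∧ β n ≤ 1)
    (hα_range : ∀ n, 0 < α n ∧ α n ≤ 1)
    (hθ_anti : Antitone θ) (hlam_anti : Antitone lam)
    (hβ_anti : Antitone β) (hα_anti : Antitone α)
    (hθ_lim : Tendsto θ atTop (𝓝 0)) (hlam_lim : Tendsto lam atTop (𝓝 0))
    (hβ_lim : Tendsto β atTop (𝓝 0)) (hα_lim : Tendsto α atTop (𝓝 0))
    (hC1 : ¬ Summable α)
    (hC2 : Tendsto (fun n => (1 / α (n+1)) * |1 / lam (n+1) - 1 / lam n|) atTop (𝓝 0))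
    (hC3 : Tendsto (fun n => (1 / lam (n+1)) * |1 - α n / α (n+1)|) atTop (𝓝 0))
    (hC4 : Tendsto (fun n => α n / lam n) atTop (𝓝 0))
    (hC5 : Tendsto (fun n => θ n / (α (n+1) * lam (n+1))) atTop (𝓝 0))
    (hC6 : ∀ n, lam n / lam (n+1) ≤ σ)
    (hC7 : Tendsto (fun n => β n / α (n+1)) atTop (𝓝 0))
    (x : ℕ → H) (w z y d : ℕ → ℕ → H) (u : ℕ → H)
    (hd1 : ∀ i ∈ Finset.Icc 1 M, d 1 i = -(h' i (z 0 i)))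
    (hw1 : ∀ n ≥ 1, w n 1 = x n)
    (hz : ∀ n ≥ 1, ∀ i ∈ Finset.Icc 1 M, z n i = w n i + θ n • (w n i - w (n-1) i))
    (hd : ∀ n ≥ 1, ∀ i ∈ Finset.Icc 1 M, d (n+1) i = -(h' i (z n i)) + β n • d n i)
    (hy : ∀ n ≥ 1, ∀ i ∈ Finset.Icc 1 M, ∀ v : H,
      f i (y n i) + (1 / (2 * lam n)) * ‖z n i + lam n • d (n+1) i - y n i‖ ^ 2
        ≤ f i v + (1 / (2 * lam n)) * ‖z n i + lam n • d (n+1) i - v‖ ^ 2)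
    (hw : ∀ n ≥ 1, ∀ i ∈ Finset.Icc 1 M,
      w n (i+1) = α n • u i + (1 - α n) • T i (y n i))
    (hx : ∀ n ≥ 1, x (n+1) = w n (M+1))
    (hy_bdd : ∀ i ∈ Finset.Icc 1 M, ∃ C, ∀ n ≥ 1, ‖y n i‖ ≤ C)
    : ∀ i ∈ Finset.Icc 1 M,
      Tendsto (fun n => ‖x n - z n i‖) atTop (𝓝 0) ∧
      Tendsto (fun n => ‖T i (x n) - x n‖) atTop (𝓝 0) := by
  classical
  obtain ⟨p, hp⟩ := hS_ne
  have hpT : ∀ i ∈ Finset.Icc 1 M, T i p = p := by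
    rw [hS] at hp
    simpa using hp
  -- extending a bound to the index zero
  have ext0 : ∀ a : ℕ → H, (∃ C, ∀ n ≥ 1, ‖a n‖ ≤ C) → ∃ C, ∀ n, ‖a n‖ ≤ C := by
    rintro a ⟨C, hC⟩
    refine ⟨max C ‖a 0‖, fun n => ?_⟩
    rcases Nat.eq_zero_or_pos n with rfl | hn
    · exact le_max_right _ _
    · exact (hC n hn).trans (le_max_left _ _)
  have bY : ∀ i ∈ Finset.Icc 1 M, ∃ C, ∀ n, ‖y n i‖ ≤ C := fun i hi =>
    ext0 (fun n => y n i) (hy_bdd i hi)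
  have bT : ∀ i ∈ Finset.Icc 1 M, ∃ C, ∀ n, ‖T i (y n i)‖ ≤ C := by
    intro i hi
    obtain ⟨C, hC⟩ := bY i hi
    refine ⟨C + ‖T i 0‖, fun n => ?_⟩
    have h1 := aux_nonexp (T i) (hT_firm i hi) (y n i) 0
    have h2 := norm_sub_norm_le (T i (y n i)) (T i 0)
    rw [sub_zero] at h1
    linarith [hC n]
  have bWs : ∀ i ∈ Finset.Icc 1 M, ∃ C, ∀ n ≥ 1, ‖w n (i+1)‖ ≤ C := by
    intro i hi
    obtain ⟨C, hC⟩ := bT i hi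
    refine ⟨‖u i‖ + C, fun n hn => ?_⟩
    rw [hw n hn i hi]
    refine (norm_add_le _ _).trans ?_
    obtain ⟨h1, h2⟩ := hα_range n
    rw [norm_smul, norm_smul, Real.norm_eq_abs, Real.norm_eq_abs, abs_of_pos h1,
      abs_of_nonneg (by linarith : 0 ≤ 1 - α n)]
    have h3 := mul_le_mul_of_nonneg_right h2 (norm_nonneg (u i))
    have h4 : (1 - α n) * ‖T i (y n i)‖ ≤ 1 * ‖T i (y n i)‖ :=
      mul_le_mul_of_nonneg_right (by linarith) (norm_nonneg _)
    linarith [hC n]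
  have bW : ∀ i ∈ Finset.Icc 1 M, ∃ C, ∀ n, ‖w n i‖ ≤ C := by
    intro i hi
    apply ext0 (fun n => w n i)
    obtain ⟨h1, h2⟩ := Finset.mem_Icc.1 hi
    rcases Nat.eq_or_lt_of_le h1 with h | h
    · subst h
      obtain ⟨C, hC⟩ := bWs M (Finset.mem_Icc.2 ⟨hM, le_rfl⟩)
      refine ⟨max C ‖w 1 1‖, fun n hn => ?_⟩
      rcases Nat.eq_or_lt_of_le hn with h | h
      · subst h; exact le_max_right _ _
      · obtain ⟨k, rfl⟩ : ∃ k, n = k + 1 := ⟨n - 1, by omega⟩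
        show ‖w (k+1) 1‖ ≤ _
        rw [hw1 (k+1) hn, hx k (by omega)]
        exact (hC k (by omega)).trans (le_max_left _ _)
    · obtain ⟨j, rfl⟩ : ∃ j, i = j + 1 := ⟨i - 1, by omega⟩
      exact bWs j (Finset.mem_Icc.2 ⟨by omega, by omega⟩)
  have bZ : ∀ i ∈ Finset.Icc 1 M, ∃ C, ∀ n, ‖z n i‖ ≤ C := by
    intro i hi
    apply ext0 (fun n => z n i)
    obtain ⟨C, hC⟩ := bW i hi
    refine ⟨3 * C, fun n hn => ?_⟩
    show ‖z n i‖ ≤ _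
    rw [hz n hn i hi]
    refine (norm_add_le _ _).trans ?_
    obtain ⟨h1, h2⟩ := hθ_range n
    rw [norm_smul, Real.norm_eq_abs, abs_of_nonneg h1]
    have h3 := mul_le_mul_of_nonneg_right h2.le (norm_nonneg (w n i - w (n-1) i))
    have h4 := norm_sub_le (w n i) (w (n-1) i)
    linarith [hC n, hC (n-1)]
  have bD : ∀ i ∈ Finset.Icc 1 M, ∃ C, ∀ n, ‖d n i‖ ≤ C := by
    intro i hi
    obtain ⟨C, hC⟩ := bZ i hi
    have hC0 : 0 ≤ C := (norm_nonneg _).trans (hC 0)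
    have hL := hL_pos i hi
    refine aux_dB (fun n => ‖d n i‖) β (1 / L i * C + ‖h' i 0‖) (by positivity)
      (fun n => norm_nonneg _) hβ_lim (fun n hn => ?_)
    show ‖d (n+1) i‖ ≤ _
    rw [hd n hn i hi]
    refine (norm_add_le _ _).trans ?_
    rw [norm_smul, norm_neg, Real.norm_eq_abs, abs_of_pos (hβ_range n).1]
    have h1 := hh_lip i hi (z n i) 0
    have h2 := norm_sub_norm_le (h' i (z n i)) (h' i 0)
    rw [sub_zero] at h1
    have h3 : 1 / L i * ‖z n i‖ ≤ 1 / L i * C := by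
      gcongr
      exact hC n
    show _ ≤ _ + β n * ‖d n i‖
    linarith
  have bAll : ∀ i ∈ Finset.Icc 1 M, ∃ C, (∀ n, ‖w n i‖ ≤ C) ∧ (∀ n, ‖z n i‖ ≤ C) ∧
      (∀ n, ‖y n i‖ ≤ C) ∧ (∀ n, ‖d n i‖ ≤ C) ∧ (∀ n, ‖T i (y n i)‖ ≤ C) ∧ ‖u i‖ ≤ C := by
    intro i hi
    obtain ⟨c1, h1⟩ := bW i hi
    obtain ⟨c2, h2⟩ := bZ i hi
    obtain ⟨c3, h3⟩ := bY i hi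
    obtain ⟨c4, h4⟩ := bD i hi
    obtain ⟨c5, h5⟩ := bT i hi
    have k1 := (norm_nonneg _).trans (h1 0)
    have k2 := (norm_nonneg _).trans (h2 0)
    have k3 := (norm_nonneg _).trans (h3 0)
    have k4 := (norm_nonneg _).trans (h4 0)
    have k5 := (norm_nonneg _).trans (h5 0)
    have k6 := norm_nonneg (u i)
    refine ⟨c1 + c2 + c3 + c4 + c5 + ‖u i‖, fun n => ?_, fun n => ?_, fun n => ?_, fun n => ?_,
      fun n => ?_, ?_⟩
    · linarith [h1 n]
    · linarith [h2 n]
    · linarith [h3 n]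
    · linarith [h4 n]
    · linarith [h5 n]
    · linarith
  -- one-step recursions
  have hrec : ∀ i ∈ Finset.Icc 1 M, ∃ δ : ℕ → ℝ, (∀ n, 0 ≤ δ n) ∧ Tendsto δ atTop (𝓝 0) ∧
      ∀ n ≥ 1, ‖w (n+1) (i+1) - w n (i+1)‖ ≤
        (1 - α (n+1)) * ‖w (n+1) i - w n i‖ + α (n+1) * δ n := by
    intro i hi
    obtain ⟨C, c1, c2, c3, c4, c5, c6⟩ := bAll i hi
    exact aux_rec (f i) (h i) (h' i) (T i) (L i) (hf_conv i hi) (hh_conv i hi) (hh_grad i hi)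
      (hL_pos i hi) (hh_lip i hi) (hT_firm i hi) θ lam β α (fun n => (hθ_range n).1) hlam_pos
      (fun n => hlam_le n i hi) (fun n => (hβ_range n).1) hα_range hθ_anti hβ_anti hlam_lim
      hC2 hC3 hC5 hC7 (fun n => w n i) (fun n => z n i) (fun n => y n i) (fun n => d n i)
      (fun n => w n (i+1)) (u i) (fun n hn => hz n hn i hi) (fun n hn => hd n hn i hi)
      (fun n hn => hy n hn i hi) (fun n hn => hw n hn i hi) C c1 c2 c3 c4 c5 c6
  have hfej : ∀ i ∈ Finset.Icc 1 M, ∃ e : ℕ → ℝ, Tendsto e atTop (𝓝 0) ∧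
      ∀ n ≥ 1, ‖w n (i+1) - p‖^2 + (‖z n i - y n i‖^2 + ‖y n i - T i (y n i)‖^2) ≤
        ‖w n i - p‖^2 + e n := by
    intro i hi
    obtain ⟨C, c1, c2, c3, c4, c5, c6⟩ := bAll i hi
    exact aux_fejer (f i) (T i) (hf_conv i hi) (hT_firm i hi) θ lam α hθ_range hlam_pos hα_range
      hθ_lim hlam_lim hα_lim (fun n => w n i) (fun n => z n i) (fun n => y n i) (fun n => d n i)
      (fun n => w n (i+1)) (u i) (fun n hn => hz n hn i hi)
      (fun n hn => hy n hn i hi) (fun n hn => hw n hn i hi) C c1 c3 c4 p (hpT i hi)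
  -- full-cycle recursions
  have hrecM : ∀ k, k + 1 ≤ M → ∃ δ : ℕ → ℝ, (∀ n, 0 ≤ δ n) ∧ Tendsto δ atTop (𝓝 0) ∧
      ∀ n ≥ 1, ‖w (n+1) (k+1+1) - w n (k+1+1)‖ ≤
        (1 - α (n+1)) * ‖w (n+1) 1 - w n 1‖ + α (n+1) * δ n := by
    intro k
    induction k with
    | zero => exact fun hk => hrec 1 (Finset.mem_Icc.2 ⟨le_rfl, hk⟩)
    | succ k ih =>
      intro hk
      obtain ⟨δ₁, p1, t1, r1⟩ := ih (by omega)
      obtain ⟨δ₂, p2, t2, r2⟩ := hrec (k+1+1) (Finset.mem_Icc.2 ⟨by omega, hk⟩)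
      refine ⟨fun n => δ₁ n + δ₂ n, fun n => add_nonneg (p1 n) (p2 n), by simpa using t1.add t2,
        fun n hn => ?_⟩
      obtain ⟨h1, h2⟩ := hα_range (n+1)
      have a1 := r1 n hn
      have a2 := r2 n hn
      have a3 : (1 - α (n+1)) * ‖w (n+1) (k+1+1) - w n (k+1+1)‖ ≤
        1 * ‖w (n+1) (k+1+1) - w n (k+1+1)‖ :=
        mul_le_mul_of_nonneg_right (by linarith) (norm_nonneg _)
      show _ ≤ _ + α (n+1) * (δ₁ n + δ₂ n)
      linarith
  have hfejM : ∀ k, k ≤ M → ∃ e : ℕ → ℝ, Tendsto e atTop (𝓝 0) ∧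
      ∀ n ≥ 1, ‖w n (k+1) - p‖^2 +
        ∑ i ∈ Finset.Icc 1 k, (‖z n i - y n i‖^2 + ‖y n i - T i (y n i)‖^2) ≤
        ‖w n 1 - p‖^2 + e n := by
    intro k
    induction k with
    | zero => exact fun _ => ⟨fun _ => 0, tendsto_const_nhds, fun n _ => by simp⟩
    | succ k ih =>
      intro hk
      obtain ⟨e₁, t1, r1⟩ := ih (by omega)
      obtain ⟨e₂, t2, r2⟩ := hfej (k+1) (Finset.mem_Icc.2 ⟨by omega, hk⟩)
      refine ⟨fun n => e₁ n + e₂ n, by simpa using t1.add t2, fun n hn => ?_⟩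
      rw [Finset.sum_Icc_succ_top (by omega)]
      have a1 := r1 n hn
      have a2 := r2 n hn
      show _ ≤ _ + (e₁ n + e₂ n)
      linarith
  -- successive differences of x tend to zero
  have hdx : Tendsto (fun n => ‖x (n+1) - x n‖) atTop (𝓝 0) := by
    obtain ⟨δ, _, t, r⟩ := hrecM (M-1) (by omega)
    rw [Nat.sub_add_cancel hM] at r
    have hs : ¬ Summable (fun n => α (n+2)) := fun hh => hC1 ((summable_nat_add_iff 2).1 hh)
    have := aux_xu (fun n => ‖x (n+2) - x (n+1)‖) (fun n => α (n+2)) (fun n => δ (n+1))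
      (fun n => hα_range (n+2)) hs (fun n => norm_nonneg _)
      (t.comp (tendsto_add_atTop_nat 1)) (fun n => by
        have := r (n+1) (by omega)
        rw [hw1 _ (by omega), hw1 _ (by omega), ← hx _ (by omega), ← hx _ (by omega)] at this
        exact this)
    exact (tendsto_add_atTop_iff_nat (f := fun n => ‖x (n+1) - x n‖) 1).1 this
  have hQ : Tendsto (fun n => ∑ i ∈ Finset.Icc 1 M,
      (‖z n i - y n i‖^2 + ‖y n i - T i (y n i)‖^2)) atTop (𝓝 0) := by
    obtain ⟨e, t, r⟩ := hfejM M le_rfl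
    obtain ⟨C, hC⟩ := bW 1 (Finset.mem_Icc.2 ⟨le_rfl, hM⟩)
    have ht : Tendsto (fun n => ‖x (n+1) - x n‖ * (2 * (C + ‖p‖)) + e n) atTop (𝓝 0) := by
      simpa using (hdx.mul_const (2 * (C + ‖p‖))).add t
    refine squeeze_zero' (Eventually.of_forall fun n => Finset.sum_nonneg fun i _ => by positivity)
      ?_ ht
    filter_upwards [eventually_ge_atTop 1] with n hn
    have h1 := r n hn
    rw [← hx n hn, hw1 n hn] at h1
    have h2 : ‖x n - p‖ ≤ C + ‖p‖ := by
      have := hC n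
      rw [hw1 n hn] at this
      exact (norm_sub_le _ _).trans (by linarith)
    have h3 : ‖x (n+1) - p‖ ≤ C + ‖p‖ := by
      have := hC (n+1)
      rw [hw1 _ (by omega)] at this
      exact (norm_sub_le _ _).trans (by linarith)
    have h4 : ‖x n - p‖ - ‖x (n+1) - p‖ ≤ ‖x (n+1) - x n‖ := by
      have := norm_sub_norm_le (x n - p) (x (n+1) - p)
      rwa [sub_sub_sub_cancel_right, norm_sub_rev (x n) (x (n+1))] at this
    have h5 : ‖x n - p‖^2 - ‖x (n+1) - p‖^2 ≤ ‖x (n+1) - x n‖ * (2 * (C + ‖p‖)) := by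
      have e1 : ‖x n - p‖^2 - ‖x (n+1) - p‖^2 =
        (‖x n - p‖ - ‖x (n+1) - p‖) * (‖x n - p‖ + ‖x (n+1) - p‖) := by ring
      rw [e1]
      exact mul_le_mul h4 (by linarith) (by positivity) (norm_nonneg _)
    linarith
  have sq0 : ∀ a : ℕ → H, (∀ᶠ n in atTop, ‖a n‖^2 ≤ ∑ i ∈ Finset.Icc 1 M,
      (‖z n i - y n i‖^2 + ‖y n i - T i (y n i)‖^2)) → Tendsto a atTop (𝓝 0) := by
    intro a ha
    have h1 : Tendsto (fun n => ‖a n‖^2) atTop (𝓝 0) :=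
      squeeze_zero' (Eventually.of_forall fun n => by positivity) ha hQ
    have h2 := h1.sqrt
    simp only [Real.sqrt_sq (norm_nonneg _), Real.sqrt_zero] at h2
    exact tendsto_zero_iff_norm_tendsto_zero.2 h2
  have single : ∀ i ∈ Finset.Icc 1 M, ∀ n, ‖z n i - y n i‖^2 + ‖y n i - T i (y n i)‖^2 ≤
      ∑ i ∈ Finset.Icc 1 M, (‖z n i - y n i‖^2 + ‖y n i - T i (y n i)‖^2) := by
    intro i hi n
    exact Finset.single_le_sum (f := fun i => ‖z n i - y n i‖^2 + ‖y n i - T i (y n i)‖^2)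
      (fun i _ => by positivity) hi
  have hzy : ∀ i ∈ Finset.Icc 1 M, Tendsto (fun n => z n i - y n i) atTop (𝓝 0) := fun i hi =>
    sq0 _ (Eventually.of_forall fun n => by
      linarith [single i hi n, sq_nonneg ‖y n i - T i (y n i)‖])
  have hyT : ∀ i ∈ Finset.Icc 1 M, Tendsto (fun n => y n i - T i (y n i)) atTop (𝓝 0) :=
    fun i hi => sq0 _ (Eventually.of_forall fun n => by
      linarith [single i hi n, sq_nonneg ‖z n i - y n i‖])
  have hwz : ∀ i ∈ Finset.Icc 1 M, Tendsto (fun n => w n i - z n i) atTop (𝓝 0) := by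
    intro i hi
    obtain ⟨C, hC⟩ := bW i hi
    apply squeeze_zero_norm' (a := fun n => θ n * (2 * C)) _ (by simpa using hθ_lim.mul_const (2 * C))
    filter_upwards [eventually_ge_atTop 1] with n hn
    rw [hz n hn i hi, sub_add_cancel_left, norm_neg, norm_smul, Real.norm_eq_abs,
      abs_of_nonneg (hθ_range n).1]
    exact mul_le_mul_of_nonneg_left ((norm_sub_le _ _).trans (by linarith [hC n, hC (n-1)]))
      (hθ_range n).1
  have hwT : ∀ i ∈ Finset.Icc 1 M, Tendsto (fun n => T i (y n i) - w n (i+1)) atTop (𝓝 0) := by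
    intro i hi
    obtain ⟨C, c1, c2, c3, c4, c5, c6⟩ := bAll i hi
    apply squeeze_zero_norm' (a := fun n => α n * (2 * C)) _ (by simpa using hα_lim.mul_const (2 * C))
    filter_upwards [eventually_ge_atTop 1] with n hn
    have e : T i (y n i) - w n (i+1) = α n • (T i (y n i) - u i) := by
      rw [hw n hn i hi]; module
    rw [e, norm_smul, Real.norm_eq_abs, abs_of_pos (hα_range n).1]
    exact mul_le_mul_of_nonneg_left ((norm_sub_le _ _).trans (by linarith [c5 n]))
      (hα_range n).1.le
  have hxw : ∀ k, k + 1 ≤ M → Tendsto (fun n => x n - w n (k+1)) atTop (𝓝 0) := by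
    intro k
    induction k with
    | zero =>
      intro _
      apply tendsto_const_nhds.congr'
      filter_upwards [eventually_ge_atTop 1] with n hn
      rw [zero_add, hw1 n hn, sub_self]
    | succ k ih =>
      intro hk
      have hi : k + 1 ∈ Finset.Icc 1 M := Finset.mem_Icc.2 ⟨by omega, by omega⟩
      have := ((((ih (by omega)).add (hwz _ hi)).add (hzy _ hi)).add (hyT _ hi)).add (hwT _ hi)
      simp only [add_zero] at this
      refine this.congr (fun n => ?_)
      abel
  intro i hi
  have hxi : Tendsto (fun n => x n - w n i) atTop (𝓝 0) := by
    obtain ⟨h1, h2⟩ := Finset.mem_Icc.1 hi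
    have := hxw (i-1) (by omega)
    rwa [Nat.sub_add_cancel h1] at this
  have hxz : Tendsto (fun n => x n - z n i) atTop (𝓝 0) := by
    have := hxi.add (hwz i hi)
    rw [add_zero] at this
    exact this.congr (fun n => by abel)
  refine ⟨tendsto_zero_iff_norm_tendsto_zero.1 hxz, ?_⟩
  have hxy : Tendsto (fun n => x n - y n i) atTop (𝓝 0) := by
    have := hxz.add (hzy i hi)
    rw [add_zero] at this
    exact this.congr (fun n => by abel)
  have ht : Tendsto (fun n => 2 * ‖x n - y n i‖ + ‖y n i - T i (y n i)‖) atTop (𝓝 0) := by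
    simpa using (hxy.norm.const_mul 2).add (hyT i hi).norm
  refine squeeze_zero (fun n => norm_nonneg _) (fun n => ?_) ht
  have h1 := aux_nonexp (T i) (hT_firm i hi) (x n) (y n i)
  have e : T i (x n) - x n = (T i (x n) - T i (y n i)) - ((x n - y n i) + (y n i - T i (y n i))) := by
    abel
  rw [e]
  have h2 := norm_sub_le (T i (x n) - T i (y n i)) ((x n - y n i) + (y n i - T i (y n i)))
  have h3 := norm_add_le (x n - y n i) (y n i - T i (y n i))
  linarith
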